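/- arXiv:1203.0253 — 5 statements merged into one kernel-verified Lean document; each statement's English description precedes it below -/
import Mathlib

section
/- Let f, g ∈ ℝ[X₁,…,Xₙ] with g nonnegative on all of ℝⁿ and g ≠ 0, let e ≥ 0 be an integer, and set d = e + ⌈(deg(f) − deg(g))/2⌉. Then there exist a sequence ỹ indexed by multi-indices of degree ≤ 2d + deg(g) and a real number s̃ such that the localizing moment matrix M_d(gỹ) is positive definite and the matrix M_e((−f)ỹ) + s̃·I is positive definite. -/
open MvPolynomial

/-- Exponent multi-indices in `n` variables of total degree at most `d`
(the exponents of the monomials of total degree `≤ d`). -/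
abbrev Idx (n d : ℕ) : Type := {α : Fin n →₀ ℕ // α.degree ≤ d}

noncomputable instance (n d : ℕ) : Fintype (Idx n d) :=
  Set.Finite.fintype (s := {α : Fin n →₀ ℕ | α.degree ≤ d}) <| by
    apply Set.Finite.subset
      (Set.finite_Iic (Finsupp.equivFunOnFinite.symm fun _ : Fin n => d))
    intro α hα
    simp only [Set.mem_Iic, Finsupp.le_def]
    intro i
    exact le_trans (Finsupp.le_degree i α) hα

/-- `f ∈ RSOS(𝒯)` : there are polynomials `u₁,…,u_l, v₁,…,v_{l'}` with
`supp(vⱼ) ⊆ 𝒯` for all `j` and `Σⱼ vⱼ² ≠ 0` such that `f · Σⱼ vⱼ² = Σᵢ uᵢ²`. -/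
def RSOS (n : ℕ) (𝒯 : Finset (Fin n →₀ ℕ)) (f : MvPolynomial (Fin n) ℝ) : Prop :=
  ∃ (l l' : ℕ) (u : Fin l → MvPolynomial (Fin n) ℝ)
    (v : Fin l' → MvPolynomial (Fin n) ℝ),
    (∀ j, (v j).support ⊆ 𝒯) ∧ (∑ j, v j ^ 2) ≠ 0 ∧
      f * (∑ j, v j ^ 2) = ∑ i, u i ^ 2

/-- `f/g ∈ RSOS(𝒯)` for a rational function `f/g` : there are polynomials
`u₁,…,u_l, v₁,…,v_{l'}` with `supp(vⱼ) ⊆ 𝒯` for all `j` and `Σⱼ vⱼ² ≠ 0`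
such that `f · Σⱼ vⱼ² = g · Σᵢ uᵢ²`. -/
def RSOSfrac (n : ℕ) (𝒯 : Finset (Fin n →₀ ℕ)) (f g : MvPolynomial (Fin n) ℝ) : Prop :=
  ∃ (l l' : ℕ) (u : Fin l → MvPolynomial (Fin n) ℝ)
    (v : Fin l' → MvPolynomial (Fin n) ℝ),
    (∀ j, (v j).support ⊆ 𝒯) ∧ (∑ j, v j ^ 2) ≠ 0 ∧
      f * (∑ j, v j ^ 2) = g * ∑ i, u i ^ 2

/-- The moment matrix of order `t` of a sequence `y`, with rows and columns
indexed by multi-indices of degree `≤ t` and `(α,β)` entry `y_{α+β}`. -/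
noncomputable def momentMatrix (n t : ℕ) (y : (Fin n →₀ ℕ) → ℝ) :
    Matrix (Idx n t) (Idx n t) ℝ :=
  fun α β => y (α.1 + β.1)

/-- The localizing moment matrix `M_t(qy)` of order `t`, with `(α,β)` entry
`Σ_γ q_γ y_{γ+α+β}`. -/
noncomputable def locMomentMatrix (n t : ℕ) (q : MvPolynomial (Fin n) ℝ)
    (y : (Fin n →₀ ℕ) → ℝ) : Matrix (Idx n t) (Idx n t) ℝ :=
  fun α β => ∑ γ ∈ q.support, q.coeff γ * y (γ + α.1 + β.1)

/-- The localizing moment matrix `M(qy)` with rows and columns indexed by the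
exponents of the monomials in `𝒯`, with `(α,β)` entry `Σ_γ q_γ y_{γ+α+β}`. -/
noncomputable def locMomentMatrixOn (n : ℕ) (𝒯 : Finset (Fin n →₀ ℕ))
    (q : MvPolynomial (Fin n) ℝ) (y : (Fin n →₀ ℕ) → ℝ) : Matrix 𝒯 𝒯 ℝ :=
  fun α β => ∑ γ ∈ q.support, q.coeff γ * y (γ + α.1 + β.1)

/-- The linear form `L_y(p) = Σ_α y_α p_α` associated to a sequence `y`. -/
noncomputable def LForm (n : ℕ) (y : (Fin n →₀ ℕ) → ℝ)
    (p : MvPolynomial (Fin n) ℝ) : ℝ :=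
  ∑ α ∈ p.support, y α * p.coeff α

/-- `p` is a sum of squares of polynomials. -/
def IsSOS (n : ℕ) (p : MvPolynomial (Fin n) ℝ) : Prop :=
  ∃ (l : ℕ) (u : Fin l → MvPolynomial (Fin n) ℝ), p = ∑ i, u i ^ 2

/-- `d = e + ⌈(deg f − deg g)/2⌉` (clamped at `e` when `deg f < deg g`). -/
def fracDeg (n e : ℕ) (f g : MvPolynomial (Fin n) ℝ) : ℕ :=
  e + ((f.totalDegree : ℤ) - (g.totalDegree : ℤ) + 1).toNat / 2

/-!
Take for `ỹ` the moments of Lebesgue measure on a compact set with nonempty interior on which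
`g ≥ 0`. If `p` is the polynomial with coefficient vector `v`, then
`vᵀ M_d(gỹ) v = L_ỹ(g p²) = ∫ g p²`, and this is positive for `v ≠ 0` because a nonzero polynomial
does not vanish on a nonempty open set. The matrix `M_e((-f)ỹ)` is symmetric, so adding `s̃ I` with
`s̃` larger than the negatives of all its eigenvalues makes it positive definite.
-/

open MeasureTheory Topology

section Polynomial

theorem eq_zero_of_eval_eq_zero_of_mem_nhds {σ R : Type*} [CommRing R] [IsDomain R]
    [TopologicalSpace R] [T1Space R] [∀ a : R, (𝓝[≠] a).NeBot] {p : MvPolynomial σ R}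
    {U : Set (σ → R)} {x : σ → R} (hU : U ∈ 𝓝 x) (hp : ∀ z ∈ U, eval z p = 0) : p = 0 := by
  rw [nhds_pi, Filter.mem_pi] at hU
  obtain ⟨I, -, t, ht, htU⟩ := hU
  refine funext_set t (fun i => infinite_of_mem_nhds (x i) (ht i)) fun z hz => ?_
  rw [hp z (htU fun i _ => hz i (Set.mem_univ i)), map_zero]

theorem setIntegral_eval_pos {σ : Type*} [Fintype σ] {K : Set (σ → ℝ)} (hK : IsCompact K)
    (hKint : (interior K).Nonempty) {p : MvPolynomial σ ℝ} (hp0 : p ≠ 0)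
    (hp : ∀ x ∈ K, 0 ≤ eval x p) : 0 < ∫ x in K, eval x p := by
  have hcont : Continuous fun x => eval x p := p.continuous_eval
  have hnonneg : 0 ≤ᵐ[volume.restrict K] fun x => eval x p :=
    ae_restrict_of_forall_mem hK.measurableSet hp
  refine (integral_nonneg_of_ae hnonneg).lt_of_ne' fun hzero => hp0 ?_
  rw [setIntegral_eq_zero_iff_of_nonneg_ae hnonneg (hcont.continuousOn.integrableOn_compact hK)]
    at hzero
  have hvanish : Set.EqOn (fun x => eval x p) 0 (interior K) :=
    Measure.eqOn_open_of_ae_eq (ae_restrict_of_ae_restrict_of_subset interior_subset hzero)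
      isOpen_interior hcont.continuousOn continuousOn_const
  obtain ⟨x, hx⟩ := hKint
  exact eq_zero_of_eval_eq_zero_of_mem_nhds (isOpen_interior.mem_nhds hx) hvanish

end Polynomial

section Matrix

open scoped ComplexOrder

variable {𝕜 ι : Type*} [RCLike 𝕜] [DecidableEq ι] {A : Matrix ι ι 𝕜}

theorem posDef_add_smul_one_of_neg_eigenvalues_lt [Fintype ι] (hA : A.IsHermitian) {s : ℝ}
    (hs : ∀ i, -hA.eigenvalues i < s) : (A + s • (1 : Matrix ι ι 𝕜)).PosDef := by
  have hB : (A + s • (1 : Matrix ι ι 𝕜)).IsHermitian := hA.add (by simp [Matrix.IsHermitian])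
  refine hB.posDef_iff_eigenvalues_pos.2 fun i => ?_
  have hmem : hB.eigenvalues i - s + s ∈ spectrum ℝ (algebraMap ℝ (Matrix ι ι 𝕜) s + A) := by
    rw [sub_add_cancel, Algebra.algebraMap_eq_smul_one, add_comm]
    exact hB.eigenvalues_mem_spectrum_real i
  rw [spectrum.add_mem_add_iff, hA.spectrum_real_eq_range_eigenvalues] at hmem
  obtain ⟨j, hj⟩ := hmem
  linarith [hs j]

theorem exists_posDef_add_smul_one [Finite ι] (hA : A.IsHermitian) :
    ∃ s : ℝ, (A + s • (1 : Matrix ι ι 𝕜)).PosDef := by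
  have := Fintype.ofFinite ι
  obtain ⟨s, hs⟩ := Finite.exists_le fun i => -hA.eigenvalues i
  exact ⟨s + 1,
    posDef_add_smul_one_of_neg_eigenvalues_lt hA fun i => (hs i).trans_lt (lt_add_one s)⟩

end Matrix

section MomentFunctional

variable {n t : ℕ}

theorem LForm_eq_constr (y : (Fin n →₀ ℕ) → ℝ) (p : MvPolynomial (Fin n) ℝ) :
    LForm n y p = (basisMonomials (Fin n) ℝ).constr ℝ y p := by
  rw [Module.Basis.constr_apply]
  exact Finset.sum_congr rfl fun α _ => mul_comm _ _

theorem LForm_monomial (y : (Fin n →₀ ℕ) → ℝ) (γ : Fin n →₀ ℕ) (c : ℝ) :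
    LForm n y (monomial γ c) = c * y γ := by
  rw [LForm_eq_constr, ← mul_one c, ← smul_eq_mul, ← smul_monomial, map_smul,
    ← congrFun (coe_basisMonomials (Fin n) ℝ) γ, Module.Basis.constr_basis, smul_eq_mul,
    smul_eq_mul, mul_one]

theorem locMomentMatrix_apply_eq_LForm (q : MvPolynomial (Fin n) ℝ) (y : (Fin n →₀ ℕ) → ℝ)
    (α β : Idx n t) :
    locMomentMatrix n t q y α β = LForm n y (q * (monomial α.1 1 * monomial β.1 1)) := by
  conv_rhs => rw [q.as_sum]
  simp only [Finset.sum_mul, monomial_mul, mul_one, LForm_eq_constr, map_sum]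
  simp only [← LForm_eq_constr, LForm_monomial, locMomentMatrix, add_assoc]

/-- The polynomial of degree at most `t` whose coefficient vector is `v`, through which the
quadratic form of a localizing moment matrix is expressed. -/
noncomputable def polyOfCoeffs (v : Idx n t → ℝ) : MvPolynomial (Fin n) ℝ :=
  ∑ α, monomial α.1 (v α)

theorem coeff_polyOfCoeffs (v : Idx n t → ℝ) (α : Idx n t) :
    (polyOfCoeffs v).coeff α.1 = v α := by
  simp [polyOfCoeffs, coeff_sum, coeff_monomial, Subtype.coe_inj]

theorem totalDegree_polyOfCoeffs_le (v : Idx n t → ℝ) : (polyOfCoeffs v).totalDegree ≤ t :=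
  totalDegree_finsetSum_le fun α _ => (totalDegree_monomial_le _ _).trans α.2

theorem polyOfCoeffs_ne_zero {v : Idx n t → ℝ} (hv : v ≠ 0) : polyOfCoeffs v ≠ 0 := by
  intro h
  exact hv (funext fun α => by rw [← coeff_polyOfCoeffs v α, h, coeff_zero, Pi.zero_apply])

theorem dotProduct_locMomentMatrix_mulVec (q : MvPolynomial (Fin n) ℝ) (y : (Fin n →₀ ℕ) → ℝ)
    (v : Idx n t → ℝ) :
    v ⬝ᵥ (locMomentMatrix n t q y).mulVec v = LForm n y (q * polyOfCoeffs v ^ 2) := by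
  have hsq : q * polyOfCoeffs v ^ 2 =
      ∑ α, ∑ β, (v α * v β) • (q * (monomial α.1 1 * monomial β.1 1)) := by
    rw [polyOfCoeffs, sq, Finset.sum_mul_sum]
    simp only [Finset.mul_sum, ← mul_smul_comm, smul_monomial, monomial_mul, smul_eq_mul, mul_one]
  simp only [hsq, LForm_eq_constr, map_sum, map_smul, dotProduct, Matrix.mulVec, Finset.mul_sum,
    locMomentMatrix_apply_eq_LForm, smul_eq_mul]
  exact Finset.sum_congr rfl fun α _ => Finset.sum_congr rfl fun β _ => by ring

theorem isHermitian_locMomentMatrix (q : MvPolynomial (Fin n) ℝ) (y : (Fin n →₀ ℕ) → ℝ) :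
    (locMomentMatrix n t q y).IsHermitian := by
  ext α β
  simp [locMomentMatrix, add_right_comm]

theorem posDef_locMomentMatrix_of_LForm_pos {q : MvPolynomial (Fin n) ℝ} {y : (Fin n →₀ ℕ) → ℝ}
    (h : ∀ p ≠ 0, p.totalDegree ≤ t → 0 < LForm n y (q * p ^ 2)) :
    (locMomentMatrix n t q y).PosDef := by
  refine .of_dotProduct_mulVec_pos (isHermitian_locMomentMatrix q y) fun v hv => ?_
  rw [star_trivial, dotProduct_locMomentMatrix_mulVec]
  exact h _ (polyOfCoeffs_ne_zero hv) (totalDegree_polyOfCoeffs_le v)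

/-- The moment sequence of a measure `μ` on `ℝⁿ`; the entry at `α` is meaningful only when `x ^ α`
is `μ`-integrable, and is `0` otherwise. -/
noncomputable def momentSequence (μ : Measure (Fin n → ℝ)) (α : Fin n →₀ ℕ) : ℝ :=
  ∫ x, ∏ i, x i ^ α i ∂μ

theorem LForm_momentSequence {μ : Measure (Fin n → ℝ)} {p : MvPolynomial (Fin n) ℝ}
    (hp : ∀ α ∈ p.support, Integrable (fun x => ∏ i, x i ^ α i) μ) :
    LForm n (momentSequence μ) p = ∫ x, eval x p ∂μ := by
  simp only [LForm, momentSequence, eval_eq']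
  rw [integral_finsetSum _ fun α hα => (hp α hα).const_mul _]
  simp only [integral_const_mul, mul_comm]

theorem posDef_locMomentMatrix_momentSequence {K : Set (Fin n → ℝ)} (hK : IsCompact K)
    (hKint : (interior K).Nonempty) {g : MvPolynomial (Fin n) ℝ} (hg0 : g ≠ 0)
    (hg : ∀ x ∈ K, 0 ≤ eval x g) :
    (locMomentMatrix n t g (momentSequence (volume.restrict K))).PosDef := by
  refine posDef_locMomentMatrix_of_LForm_pos fun p hp _ => ?_
  have hint (α : Fin n →₀ ℕ) : IntegrableOn (fun x : Fin n → ℝ => ∏ i, x i ^ α i) K :=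
    ContinuousOn.integrableOn_compact hK (by fun_prop)
  rw [LForm_momentSequence fun α _ => hint α]
  refine setIntegral_eval_pos hK hKint (mul_ne_zero hg0 (pow_ne_zero 2 hp)) fun x hx => ?_
  rw [map_mul, map_pow]
  exact mul_nonneg (hg x hx) (sq_nonneg _)

end MomentFunctional

theorem statement9_general (n : ℕ) {K : Set (Fin n → ℝ)} (hK : (interior K).Nonempty) :
    ∃ y : (Fin n →₀ ℕ) → ℝ, ∀ g : MvPolynomial (Fin n) ℝ, g ≠ 0 → (∀ x ∈ K, 0 ≤ eval x g) →
      ∀ (d e : ℕ) (f : MvPolynomial (Fin n) ℝ), ∃ s : ℝ,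
        (locMomentMatrix n d g y).PosDef ∧
        (locMomentMatrix n e (-f) y + s • (1 : Matrix (Idx n e) (Idx n e) ℝ)).PosDef := by
  obtain ⟨x, hx⟩ := hK
  obtain ⟨L, hLx, hLK, hL⟩ := local_compact_nhds (mem_interior_iff_mem_nhds.1 hx)
  refine ⟨momentSequence (volume.restrict L), fun g hg0 hg d e f => ?_⟩
  obtain ⟨s, hs⟩ := exists_posDef_add_smul_one
    (isHermitian_locMomentMatrix (t := e) (-f) (momentSequence (volume.restrict L)))
  exact ⟨s, posDef_locMomentMatrix_momentSequence hL ⟨x, mem_interior_iff_mem_nhds.2 hLx⟩ hg0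
    fun z hz => hg z (hLK hz), hs⟩

/-- for `g` nonnegative on `ℝⁿ` and `g ≠ 0`, with
`d = e + ⌈(deg f − deg g)/2⌉`, there exist a sequence `ỹ` (indexed by multi-indices
of degree `≤ 2d + deg g`; here defined on all multi-indices) and `s̃ ∈ ℝ` with
`M_d(gỹ)` positive definite and `M_e((−f)ỹ) + s̃·I` positive definite. -/
theorem statement9 (n e : ℕ) (f g : MvPolynomial (Fin n) ℝ) (hg0 : g ≠ 0)
    (hg : ∀ x : Fin n → ℝ, 0 ≤ eval x g) :
    ∃ (y : (Fin n →₀ ℕ) → ℝ) (s : ℝ),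
      (locMomentMatrix n (fracDeg n e f g) g y).PosDef ∧
      (locMomentMatrix n e (-f) y + s • (1 : Matrix (Idx n e) (Idx n e) ℝ)).PosDef := by
  obtain ⟨y, hy⟩ := statement9_general n (K := Set.univ) (by simp)
  exact ⟨y, hy g hg0 (fun x _ => hg x) (fracDeg n e f g) e f⟩
end

section
/- Let f, g ∈ ℝ[X₁,…,Xₙ] with g ≠ 0 and gcd(f, g) = 1. If neither f nor −f is a sum of squares of polynomials, then there do not exist polynomials u₁,…,u_l, v₁,…,v_{l′} ∈ ℝ[X₁,…,Xₙ] with deg(v_j) ≤ deg(g)/2 for every j and Σ_j v_j² ≠ 0 such that f · Σ_j v_j² = g · Σ_i u_i². -/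
open MvPolynomial

/-!
If `f * V = g * U` with `f` and `g` relatively prime, then `g` divides `V`. When `V` is nonzero of
degree at most `deg g`, this forces `V = c * g` and hence `U = c * f` for a nonzero scalar `c`. For
`U` a sum of squares, absorbing `c⁻¹` up to sign shows that `f` or `-f` is a sum of squares.
-/

section Proportionality

variable {σ R : Type*} [CommSemiring R] {f g U V : MvPolynomial σ R}

theorem exists_eq_C_mul_of_dvd_of_totalDegree_le [NoZeroDivisors R] (hV : V ≠ 0)
    (hdvd : g ∣ V) (hdeg : V.totalDegree ≤ g.totalDegree) : ∃ c : R, c ≠ 0 ∧ V = C c * g := by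
  obtain ⟨w, rfl⟩ := hdvd
  obtain ⟨hg, hw⟩ := mul_ne_zero_iff.1 hV
  rw [totalDegree_mul_of_isDomain hg hw] at hdeg
  have hw_const : w = C (coeff 0 w) := totalDegree_eq_zero_iff_eq_C.1 (by lia)
  refine ⟨coeff 0 w, fun h_coeff => hw ?_, ?_⟩
  · rw [hw_const, h_coeff, C_0]
  · rw [← hw_const, mul_comm]

theorem exists_eq_C_mul_of_mul_eq_mul_of_isRelPrime [IsCancelAdd R] [IsCancelMulZero R]
    [DecompositionMonoid (MvPolynomial σ R)] (hfg : IsRelPrime f g) (hV : V ≠ 0)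
    (hdeg : V.totalDegree ≤ g.totalDegree) (heq : f * V = g * U) :
    ∃ c : R, c ≠ 0 ∧ U = C c * f := by
  have hdvd : g ∣ V := hfg.symm.dvd_of_dvd_mul_left ⟨U, heq⟩
  have hg : g ≠ 0 := ne_zero_of_dvd_ne_zero hV hdvd
  obtain ⟨c, hc, rfl⟩ := exists_eq_C_mul_of_dvd_of_totalDegree_le hV hdvd hdeg
  refine ⟨c, hc, mul_left_cancel₀ hg ?_⟩
  rw [← heq]
  ring

end Proportionality

theorem totalDegree_sum_sq_le {σ R ι : Type*} [CommSemiring R] {s : Finset ι}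
    {v : ι → MvPolynomial σ R} {d : ℕ} (hv : ∀ j ∈ s, 2 * (v j).totalDegree ≤ d) :
    (∑ j ∈ s, v j ^ 2).totalDegree ≤ d :=
  totalDegree_finsetSum_le fun j hj => (totalDegree_pow _ _).trans (hv j hj)

theorem isSumSq_map {F A B : Type*} [NonUnitalNonAssocSemiring A] [NonUnitalNonAssocSemiring B]
    [FunLike F A B] [NonUnitalRingHomClass F A B] (φ : F) {a : A} (ha : IsSumSq a) :
    IsSumSq (φ a) := by
  induction ha with
  | zero => rw [map_zero]; exact .zero
  | sq_add x _ ih => rw [map_add, map_mul]; exact .sq_add _ ih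

theorem isSumSq_smul {R A : Type*} [CommSemiring R] [CommSemiring A] [Algebra R A] {c : R} {a : A}
    (hc : IsSumSq c) (ha : IsSumSq a) : IsSumSq (c • a) := by
  rw [Algebra.smul_def]
  exact (isSumSq_map (algebraMap R A) hc).mul ha

theorem isSumSq_or_isSumSq_neg_of_smul {K A : Type*} [Field K] [CommRing A] [Algebra K A]
    (hK : ∀ c : K, IsSumSq c ∨ IsSumSq (-c)) {c : K} (hc : c ≠ 0) {a : A}
    (ha : IsSumSq (c • a)) : IsSumSq a ∨ IsSumSq (-a) := by
  refine (hK c⁻¹).imp (fun h_inv => ?_) (fun h_inv => ?_)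
  · simpa only [inv_smul_smul₀ hc] using isSumSq_smul h_inv ha
  · simpa only [neg_smul, inv_smul_smul₀ hc] using isSumSq_smul h_inv ha

theorem statement12_general {σ K : Type*} [Field K] (hK : ∀ c : K, IsSumSq c ∨ IsSumSq (-c))
    {f g U V : MvPolynomial σ K} (hfg : IsRelPrime f g) (hf : ¬ IsSumSq f)
    (hf_neg : ¬ IsSumSq (-f)) (hU : IsSumSq U) (hV : V ≠ 0)
    (hdeg : V.totalDegree ≤ g.totalDegree) : f * V ≠ g * U := by
  intro heq
  obtain ⟨c, hc, rfl⟩ := exists_eq_C_mul_of_mul_eq_mul_of_isRelPrime hfg hV hdeg heq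
  rw [C_mul'] at hU
  exact (isSumSq_or_isSumSq_neg_of_smul hK hc hU).elim hf hf_neg

theorem real_isSumSq_or_isSumSq_neg (c : ℝ) : IsSumSq c ∨ IsSumSq (-c) :=
  (le_total 0 c).imp (fun hc => (Real.isSquare_iff.2 hc).isSumSq)
    (fun hc => (Real.isSquare_iff.2 (neg_nonneg.2 hc)).isSumSq)

theorem isSOS_of_isSumSq {n : ℕ} {p : MvPolynomial (Fin n) ℝ} (hp : IsSumSq p) : IsSOS n p := by
  induction hp with
  | zero => exact ⟨0, Fin.elim0, by rw [Fin.sum_univ_zero]⟩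
  | sq_add q _ ih =>
    obtain ⟨l, u, rfl⟩ := ih
    exact ⟨l + 1, Fin.cons q u, by
      simp only [Fin.sum_univ_succ, Fin.cons_zero, Fin.cons_succ, sq]⟩

/-- if `g ≠ 0`, `gcd(f,g) = 1` (i.e. every common divisor of `f` and
`g` is a unit) and neither `f` nor `−f` is a sum of squares, then there are no
polynomials `u₁,…,u_l, v₁,…,v_{l'}` with `deg(vⱼ) ≤ deg(g)/2` (i.e.
`2·deg(vⱼ) ≤ deg g`) for all `j` and `Σⱼ vⱼ² ≠ 0` such that
`f · Σⱼ vⱼ² = g · Σᵢ uᵢ²`. -/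
theorem statement12 (n : ℕ) (f g : MvPolynomial (Fin n) ℝ) (hg : g ≠ 0)
    (hgcd : IsRelPrime f g) (h1 : ¬ IsSOS n f) (h2 : ¬ IsSOS n (-f)) :
    ¬ ∃ (l l' : ℕ) (u : Fin l → MvPolynomial (Fin n) ℝ)
        (v : Fin l' → MvPolynomial (Fin n) ℝ),
        (∀ j, 2 * (v j).totalDegree ≤ g.totalDegree) ∧
        (∑ j, v j ^ 2) ≠ 0 ∧
        f * (∑ j, v j ^ 2) = g * ∑ i, u i ^ 2 := by
  rintro ⟨l, l', u, v, hdeg, hV, heq⟩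
  exact statement12_general real_isSumSq_or_isSumSq_neg hgcd (mt isSOS_of_isSumSq h1)
    (mt isSOS_of_isSumSq h2) (.sum_sq _ u) hV (totalDegree_sum_sq_le fun j _ => hdeg j) heq
end

section
/- The Motzkin polynomial f(X₁, X₂) = X₁⁴X₂² + X₁²X₂⁴ + 1 − 3X₁²X₂² is not a sum of squares of real polynomials; that is, there do not exist polynomials u₁,…,u_l ∈ ℝ[X₁, X₂] with f = Σ_i u_i². -/
open MvPolynomial

/-!
If `f = ∑ uᵢ ^ 2`, the vertices of the convex hull of the exponents of all the `uᵢ` cannot cancel in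
the sum, so every exponent of every `uᵢ` lies in half the Newton polytope of `f`. For the Motzkin
polynomial this half is the triangle with vertices `(2, 1)`, `(1, 2)`, `(0, 0)`, in which `(2, 2)`
is a sum of two lattice points only as `(1, 1) + (1, 1)`. The coefficient of `X₁²X₂²` in `f` would
therefore be a sum of squares, but it is negative.
-/

section SumSq

variable {σ ι R : Type*}

theorem coeff_add_self_sq [CommSemiring R] {p : MvPolynomial σ R} {m : σ →₀ ℕ}
    (h : ∀ a ∈ p.support, ∀ b ∈ p.support, a + b = m + m → a = m) :
    coeff (m + m) (p ^ 2) = coeff m p ^ 2 := by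
  classical
  rw [sq, coeff_mul, Finset.sum_eq_single (m, m), sq]
  · rintro ⟨a, b⟩ hab hne
    rw [Finset.HasAntidiagonal.mem_antidiagonal] at hab
    by_contra hprod
    obtain rfl := h a (mem_support_iff.mpr (left_ne_zero_of_mul hprod)) b
      (mem_support_iff.mpr (right_ne_zero_of_mul hprod)) hab
    exact hne (Prod.ext rfl (add_left_cancel hab))
  · intro hm
    simp at hm

theorem coeff_add_self_sum_sq [CommSemiring R] {s : Finset ι} {u : ι → MvPolynomial σ R}
    {m : σ →₀ ℕ}
    (h : ∀ i ∈ s, ∀ a ∈ (u i).support, ∀ b ∈ (u i).support, a + b = m + m → a = m) :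
    coeff (m + m) (∑ i ∈ s, u i ^ 2) = ∑ i ∈ s, coeff m (u i) ^ 2 := by
  rw [coeff_sum]
  exact Finset.sum_congr rfl fun i hi => coeff_add_self_sq (h i hi)

variable [CommRing R] [LinearOrder R] [IsStrictOrderedRing R]
  {M : Type*} [AddCommMonoid M] [LinearOrder M] [IsOrderedCancelAddMonoid M]
  {s : Finset ι} {u : ι → MvPolynomial σ R} {i : ι} {n : σ →₀ ℕ}

theorem exists_add_self_mem_support_sum_sq_of_injective {w : (σ →₀ ℕ) →+ M}
    (hw : Function.Injective w) (hi : i ∈ s) (hn : n ∈ (u i).support) :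
    ∃ m, m + m ∈ (∑ j ∈ s, u j ^ 2).support ∧ w n ≤ w m := by
  classical
  have hmem {j a} (hj : j ∈ s) (ha : a ∈ (u j).support) : a ∈ s.biUnion fun j => (u j).support :=
    Finset.mem_biUnion.mpr ⟨j, hj, ha⟩
  obtain ⟨m, hm, hmax⟩ := Finset.exists_max_image _ w ⟨n, hmem hi hn⟩
  obtain ⟨k, hk, hmk⟩ := Finset.mem_biUnion.mp hm
  have heq_max : ∀ j ∈ s, ∀ a ∈ (u j).support, ∀ b ∈ (u j).support, a + b = m + m → a = m := by
    intro j hj a ha b hb hab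
    have hsum : w a + w b = w m + w m := by rw [← map_add, hab, map_add]
    exact hw ((add_eq_add_iff_eq_and_eq (hmax a (hmem hj ha)) (hmax b (hmem hj hb))).mp hsum).1
  refine ⟨m, ?_, hmax n (hmem hi hn)⟩
  rw [mem_support_iff, coeff_add_self_sum_sq heq_max]
  exact ne_of_gt <| Finset.sum_pos' (fun j _ => sq_nonneg (coeff m (u j)))
    ⟨k, hk, sq_pos_of_ne_zero (mem_support_iff.mp hmk)⟩

theorem exists_add_self_mem_support_sum_sq (w : (σ →₀ ℕ) →+ M) (hi : i ∈ s)
    (hn : n ∈ (u i).support) :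
    ∃ m, m + m ∈ (∑ j ∈ s, u j ^ 2).support ∧ w n ≤ w m := by
  classical
  let : LinearOrder σ := linearOrderOfSTO WellOrderingRel
  -- Breaking ties in `w` lexicographically makes the weight injective.
  let wLex : (σ →₀ ℕ) →+ M ×ₗ Lex (σ →₀ ℕ) :=
    { toFun := fun m => toLex (w m, toLex m)
      map_zero' := by rw [map_zero]; rfl
      map_add' := fun a b => by rw [map_add]; rfl }
  have hinj : Function.Injective wLex := fun a b hab =>
    toLex.injective (congrArg Prod.snd (toLex.injective hab))
  obtain ⟨m, hm, hle⟩ := exists_add_self_mem_support_sum_sq_of_injective hinj hi hn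
  exact ⟨m, hm, Prod.Lex.monotone_fst _ _ hle⟩

theorem weight_le_of_mem_support_of_sum_sq (w : (σ →₀ ℕ) →+ M) {c : M}
    (h : ∀ m, m + m ∈ (∑ j ∈ s, u j ^ 2).support → w m ≤ c) (hi : i ∈ s)
    (hn : n ∈ (u i).support) : w n ≤ c :=
  let ⟨m, hm, hle⟩ := exists_add_self_mem_support_sum_sq w hi hn
  hle.trans (h m hm)

end SumSq

section Motzkin

variable {ι R : Type*} [CommRing R]

/-- The Motzkin polynomial with arbitrary coefficients on its four monomials, the one of the
interior monomial `X₁²X₂²` being subtracted; the Motzkin polynomial itself is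
`generalizedMotzkin 1 1 1 3`. -/
noncomputable def generalizedMotzkin (a b c d : R) : MvPolynomial (Fin 2) R :=
  C a * X 0 ^ 4 * X 1 ^ 2 + C b * X 0 ^ 2 * X 1 ^ 4 + C c - C d * X 0 ^ 2 * X 1 ^ 2

theorem generalizedMotzkin_one_one_one_three (R : Type*) [CommRing R] :
    generalizedMotzkin (1 : R) 1 1 3 =
      X 0 ^ 4 * X 1 ^ 2 + X 0 ^ 2 * X 1 ^ 4 + 1 - 3 * X 0 ^ 2 * X 1 ^ 2 := by
  rw [generalizedMotzkin, C_1, one_mul, one_mul, map_ofNat C 3]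

theorem coeff_C_mul_X_zero_pow_mul_X_one_pow {S : Type*} [CommSemiring S] (m : Fin 2 →₀ ℕ) (r : S)
    (j k : ℕ) :
    coeff m (C r * X 0 ^ j * X 1 ^ k : MvPolynomial (Fin 2) S) =
      if m 0 = j ∧ m 1 = k then r else 0 := by
  classical
  rw [mul_assoc, coeff_C_mul, X_pow_eq_monomial, X_pow_eq_monomial, monomial_mul, coeff_monomial]
  simp [Finsupp.ext_iff, Fin.forall_fin_two, eq_comm]

theorem coeff_generalizedMotzkin (a b c d : R) (m : Fin 2 →₀ ℕ) :
    coeff m (generalizedMotzkin a b c d) =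
      (if m 0 = 4 ∧ m 1 = 2 then a else 0) + (if m 0 = 2 ∧ m 1 = 4 then b else 0) +
        (if m 0 = 0 ∧ m 1 = 0 then c else 0) - (if m 0 = 2 ∧ m 1 = 2 then d else 0) := by
  have hconst : (C c : MvPolynomial (Fin 2) R) = C c * X 0 ^ 0 * X 1 ^ 0 := by
    rw [pow_zero, pow_zero, mul_one, mul_one]
  rw [generalizedMotzkin, hconst]
  simp only [coeff_sub, coeff_add, coeff_C_mul_X_zero_pow_mul_X_one_pow]

theorem half_exponent_generalizedMotzkin {a b c d : R} {m : Fin 2 →₀ ℕ}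
    (hm : m + m ∈ (generalizedMotzkin a b c d).support) :
    (m 0 = 2 ∧ m 1 = 1) ∨ (m 0 = 1 ∧ m 1 = 2) ∨ (m 0 = 0 ∧ m 1 = 0) ∨ (m 0 = 1 ∧ m 1 = 1) := by
  contrapose! hm
  rw [notMem_support_iff, coeff_generalizedMotzkin, Finsupp.add_apply, Finsupp.add_apply,
    if_neg (by omega), if_neg (by omega), if_neg (by omega), if_neg (by omega)]
  simp only [add_zero, sub_zero]

variable [LinearOrder R] [IsStrictOrderedRing R]
  {a b c d : R} {s : Finset ι} {u : ι → MvPolynomial (Fin 2) R}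

theorem exponent_mem_half_triangle_of_generalizedMotzkin_eq_sum_sq
    (hu : generalizedMotzkin a b c d = ∑ i ∈ s, u i ^ 2) {i : ι} (hi : i ∈ s) {n : Fin 2 →₀ ℕ}
    (hn : n ∈ (u i).support) : n 0 ≤ 2 * n 1 ∧ n 1 ≤ 2 * n 0 ∧ n 0 + n 1 ≤ 3 := by
  have hweight (p q : ℤ) (m : Fin 2 →₀ ℕ) :
      Finsupp.weight ![p, q] m = m 0 * p + m 1 * q := by
    simp [Finsupp.weight_eq_sum]
  have hedge (p q r : ℤ) (h₂₁ : 2 * p + q ≤ r) (h₁₂ : p + 2 * q ≤ r) (h₀₀ : 0 ≤ r) :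
      n 0 * p + n 1 * q ≤ r := by
    rw [← hweight]
    refine weight_le_of_mem_support_of_sum_sq _ (fun m hm => ?_) hi hn
    rw [← hu] at hm
    rw [hweight]
    obtain ⟨h₀, h₁⟩ | ⟨h₀, h₁⟩ | ⟨h₀, h₁⟩ | ⟨h₀, h₁⟩ := half_exponent_generalizedMotzkin hm <;>
      rw [h₀, h₁] <;> push_cast <;> linarith
  have h₀ := hedge 1 (-2) 0 (by norm_num) (by norm_num) le_rfl
  have h₁ := hedge (-2) 1 0 (by norm_num) (by norm_num) le_rfl
  have h₂ := hedge 1 1 3 (by norm_num) (by norm_num) (by norm_num)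
  omega

theorem statement14_general (hd : 0 < d) : generalizedMotzkin a b c d ≠ ∑ i ∈ s, u i ^ 2 := by
  intro hu
  let e : Fin 2 →₀ ℕ := Finsupp.single 0 1 + Finsupp.single 1 1
  have he₀ : e 0 = 1 := by simp [e]
  have he₁ : e 1 = 1 := by simp [e]
  have hunique : ∀ i ∈ s, ∀ m ∈ (u i).support, ∀ n ∈ (u i).support, m + n = e + e → m = e := by
    intro i hi m hm n hn hmn
    have hm_tri := exponent_mem_half_triangle_of_generalizedMotzkin_eq_sum_sq hu hi hm
    have hn_tri := exponent_mem_half_triangle_of_generalizedMotzkin_eq_sum_sq hu hi hn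
    have h₀ : m 0 + n 0 = e 0 + e 0 := DFunLike.congr_fun hmn 0
    have h₁ : m 1 + n 1 = e 1 + e 1 := DFunLike.congr_fun hmn 1
    exact Finsupp.ext (Fin.forall_fin_two.mpr ⟨by omega, by omega⟩)
  have hcoeff : -d = ∑ i ∈ s, coeff e (u i) ^ 2 := by
    rw [← coeff_add_self_sum_sq hunique, ← hu, coeff_generalizedMotzkin]
    simp [he₀, he₁]
  have hnonneg : 0 ≤ ∑ i ∈ s, coeff e (u i) ^ 2 := Finset.sum_nonneg fun i _ => sq_nonneg _
  linarith

end Motzkin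

/-- the Motzkin polynomial
`f(X₁,X₂) = X₁⁴X₂² + X₁²X₂⁴ + 1 − 3X₁²X₂²` is not a sum of squares of real
polynomials. -/
theorem statement14 :
    ¬ ∃ (l : ℕ) (u : Fin l → MvPolynomial (Fin 2) ℝ),
      (X 0 ^ 4 * X 1 ^ 2 + X 0 ^ 2 * X 1 ^ 4 + 1 - 3 * X 0 ^ 2 * X 1 ^ 2 :
        MvPolynomial (Fin 2) ℝ) = ∑ i, u i ^ 2 := by
  rintro ⟨l, u, hu⟩
  exact statement14_general three_pos ((generalizedMotzkin_one_one_one_three ℝ).trans hu)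
end

section
/- Let n = 4 and in ℝ[X₁,…,X₄] define M₂ = Σ_{i=1}^4 X_i², M₄ = Σ_{i=1}^4 X_i⁴, M₆ = Σ_{i=1}^4 X_i⁶, and f_{4,2} = 6·M₆ − 5·M₂·M₄ + M₂³. Then there do not exist polynomials u₁,…,u_l, v₁,…,v_{l′} ∈ ℝ[X₁,…,X₄] with deg(v_j) ≤ 1 for every j and Σ_j v_j² ≠ 0 such that f_{4,2} · Σ_j v_j² = Σ_i u_i². In other words, f_{4,2} admits no Hilbert–Artin representation as a fraction of sums of squares with denominator of degree ≤ 2. -/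
open MvPolynomial

/-- The power sum `M_{n,r} = Σᵢ Xᵢʳ`. -/
noncomputable def powerSum (n r : ℕ) : MvPolynomial (Fin n) ℝ :=
  ∑ i : Fin n, X i ^ r

/-!
Write `f_k` for the sextic and compare top-degree parts in `f_k * ∑ vⱼ² = ∑ uᵢ²`. Over an ordered
ring the leading forms of squares cannot cancel, so the quartic parts of the `uᵢ` vanish wherever
`f_k` does. A vector with `m` nonzero entries, all `±1`, satisfies
`f_k = m * (m - k) * (m - k - 1)`, hence it is a zero for `m = k` and `m = k + 1`. Averaging a
quartic form over signs kills its non-even monomials, and counting the monomials `Xᵢ⁴`, `Xᵢ² Xⱼ²`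
supported on a set of `k + 1` variables and on its `k`-element subsets then shows that a quartic
form with these zeros has no `Xᵢ⁴` terms. It thus vanishes at the unit vectors, where
`f_k = k * (k - 1)` does not, and so the linear parts of the `vⱼ` vanish there too.
-/

open Finset

section TopDegree

variable {σ R ι : Type*}

lemma homogeneousComponent_mul_of_totalDegree_le [CommSemiring R] {p q : MvPolynomial σ R}
    {m n : ℕ} (hp : p.totalDegree ≤ m) (hq : q.totalDegree ≤ n) :
    homogeneousComponent (m + n) (p * q) =
      homogeneousComponent m p * homogeneousComponent n q := by
  classical
  ext d
  rw [coeff_homogeneousComponent]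
  split_ifs with hd
  · rw [coeff_mul, coeff_mul]
    refine sum_congr rfl fun x hx => ?_
    have hdeg : x.1.degree + x.2.degree = m + n := by
      rw [← map_add, mem_antidiagonal.1 hx, hd]
    have hp' : m < x.1.degree → coeff x.1 p = 0 := fun h =>
      coeff_eq_zero_of_totalDegree_lt (hp.trans_lt h)
    have hq' : n < x.2.degree → coeff x.2 q = 0 := fun h =>
      coeff_eq_zero_of_totalDegree_lt (hq.trans_lt h)
    simp only [coeff_homogeneousComponent]
    rcases lt_trichotomy x.1.degree m with h | h | h
    · rw [hq' (by omega), if_neg h.ne, mul_zero, zero_mul]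
    · rw [if_pos h, if_pos (by omega)]
    · rw [hp' h, if_neg h.ne', zero_mul, zero_mul]
  · exact (((homogeneousComponent_isHomogeneous m p).mul
      (homogeneousComponent_isHomogeneous n q)).coeff_eq_zero hd).symm

lemma homogeneousComponent_sum_sq [CommSemiring R] [Fintype ι] {p : ι → MvPolynomial σ R} {n : ℕ}
    (hp : ∀ i, (p i).totalDegree ≤ n) :
    homogeneousComponent (n + n) (∑ i, p i ^ 2) = ∑ i, homogeneousComponent n (p i) ^ 2 := by
  simp only [map_sum, sq, homogeneousComponent_mul_of_totalDegree_le (hp _) (hp _)]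

lemma totalDegree_le_of_homogeneousComponent_eq_zero [CommSemiring R] {p : MvPolynomial σ R}
    {n : ℕ} (hp : p.totalDegree ≤ n + 1) (htop : homogeneousComponent (n + 1) p = 0) :
    p.totalDegree ≤ n := by
  refine Finset.sup_le fun d hd => ?_
  by_contra! hlt
  have hdeg : d.degree = n + 1 := le_antisymm ((le_totalDegree hd).trans hp) hlt
  have hcoeff := congrArg (coeff d) htop
  rw [coeff_homogeneousComponent, if_pos hdeg, coeff_zero] at hcoeff
  exact mem_support_iff.1 hd hcoeff

lemma eval_piSingle_one_of_isHomogeneous [CommSemiring R] [DecidableEq σ]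
    {p : MvPolynomial σ R} {n : ℕ} (hp : p.IsHomogeneous n) (i : σ) :
    eval (Pi.single i 1) p = coeff (Finsupp.single i n) p := by
  rw [eval_eq, sum_eq_single (Finsupp.single i n)]
  · rw [prod_eq_one fun j hj => ?_, mul_one]
    rw [mem_singleton.1 (Finsupp.support_single_subset hj), Pi.single_eq_same, one_pow]
  · intro d hd hne
    obtain ⟨j, hj, hji⟩ : ∃ j ∈ d.support, j ≠ i := by
      by_contra! hsub
      have hd_single : d = Finsupp.single i (d i) :=
        Finsupp.support_subset_singleton.1 fun j hj => mem_singleton.2 (hsub j hj)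
      have hdeg : d.degree = n := (hp.degree_eq_sum_deg_support hd).symm
      rw [hd_single, Finsupp.degree_single] at hdeg
      exact hne (hdeg ▸ hd_single)
    rw [prod_eq_zero hj, mul_zero]
    rw [Pi.single_eq_of_ne hji, zero_pow (Finsupp.mem_support_iff.1 hj)]
  · intro h
    rw [notMem_support_iff.1 h, zero_mul]

variable [CommRing R] [LinearOrder R] [IsStrictOrderedRing R]

lemma eq_zero_of_sum_sq_eq_zero [Fintype ι] {p : ι → MvPolynomial σ R}
    (h : ∑ i, p i ^ 2 = 0) (i : ι) : p i = 0 := by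
  refine MvPolynomial.funext fun x => ?_
  have hx : ∑ i, eval x (p i) ^ 2 = 0 := by simpa using congrArg (eval x) h
  rw [Fintype.sum_eq_zero_iff_of_nonneg fun _ => sq_nonneg _] at hx
  simpa using congrFun hx i

lemma totalDegree_le_of_sum_sq [Fintype ι] {p : ι → MvPolynomial σ R} {n : ℕ}
    (h : (∑ i, p i ^ 2).totalDegree ≤ n + n) (i : ι) : (p i).totalDegree ≤ n := by
  suffices descend : ∀ m, (∀ i, (p i).totalDegree ≤ n + m) → ∀ i, (p i).totalDegree ≤ n from
    descend (univ.sup fun i => (p i).totalDegree)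
      (fun i => le_add_left (le_sup (f := fun i => (p i).totalDegree) (mem_univ i))) i
  intro m
  induction m with
  | zero => exact id
  | succ m ih =>
    intro hm
    have htop : ∑ i, homogeneousComponent (n + (m + 1)) (p i) ^ 2 = 0 := by
      rw [← homogeneousComponent_sum_sq hm, homogeneousComponent_eq_zero]
      omega
    exact ih fun i =>
      totalDegree_le_of_homogeneousComponent_eq_zero (hm i) (eq_zero_of_sum_sq_eq_zero htop i)

end TopDegree

section SignVectors

variable {σ R : Type*} [DecidableEq σ]

/-- The `0, ±1` vector supported on `T` with the signs prescribed by `ε`; the values of `ε` off `T`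
are ignored. -/
def signVector (R : Type*) [Ring R] (T : Finset σ) (ε : σ → ℤˣ) (i : σ) : R :=
  if i ∈ T then ((ε i : ℤ) : R) else 0

lemma signVector_singleton_one [Ring R] (i : σ) : signVector R {i} 1 = Pi.single i 1 := by
  ext j
  simp [signVector, Pi.single_apply]

variable [Fintype σ] [CommRing R]

/-- The sum of the values of `p` at the `0, ±1` vectors supported on `T`, each of them counted once
for every way of extending its signs to all of `σ`. -/
noncomputable def signSum (T : Finset σ) (p : MvPolynomial σ R) : R :=
  ∑ ε : σ → ℤˣ, eval (signVector R T ε) p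

lemma sum_prod_signVector_pow (T : Finset σ) (d : σ →₀ ℕ) :
    ∑ ε : σ → ℤˣ, ∏ i, signVector R T ε i ^ d i =
      if (∀ i, Even (d i)) ∧ d.support ⊆ T then 2 ^ Fintype.card σ else 0 := by
  have hfactor (i : σ) : ∑ s : ℤˣ, (if i ∈ T then ((s : ℤ) : R) else 0) ^ d i =
      if Even (d i) ∧ (d i ≠ 0 → i ∈ T) then 2 else 0 := by
    rw [UnitsInt.univ, sum_pair (by decide)]
    rcases eq_or_ne (d i) 0 with h0 | h0 <;> by_cases hT : i ∈ T <;>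
      rcases (d i).even_or_odd with heven | hodd <;>
      simp_all [one_add_one_eq_two]
  simp only [signVector]
  rw [← Fintype.prod_sum fun i (s : ℤˣ) => (if i ∈ T then ((s : ℤ) : R) else 0) ^ d i]
  simp only [hfactor, prod_ite_zero, mem_univ, true_imp_iff, prod_const, card_univ, subset_iff,
    Finsupp.mem_support_iff, forall_and]

lemma signSum_eq_sum_support (T : Finset σ) (p : MvPolynomial σ R) :
    signSum T p = ∑ d ∈ p.support, coeff d p *
      if (∀ i, Even (d i)) ∧ d.support ⊆ T then 2 ^ Fintype.card σ else 0 := by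
  simp only [signSum, eval_eq', ← sum_prod_signVector_pow, mul_sum]
  exact sum_comm

end SignVectors

section QuarticForms

variable {σ R : Type*}

lemma eq_single_or_card_support_eq_two {d : σ →₀ ℕ} (hdeg : d.degree = 4)
    (heven : ∀ i, Even (d i)) : (∃ i, d = Finsupp.single i 4) ∨ #d.support = 2 := by
  have htwo : ∀ i ∈ d.support, 2 ≤ d i := fun i hi => by
    have := heven i
    have := Finsupp.mem_support_iff.1 hi
    grind
  have hle : #d.support * 2 ≤ d.degree := card_nsmul_le_sum _ _ _ htwo
  have hpos : #d.support ≠ 0 := by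
    rw [Finset.card_ne_zero, Finsupp.support_nonempty_iff]
    rintro rfl
    simp at hdeg
  obtain hone | htwo : #d.support = 1 ∨ #d.support = 2 := by omega
  · obtain ⟨i, n, -, rfl⟩ := Finsupp.card_support_eq_one'.1 hone
    exact Or.inl ⟨i, by rw [← hdeg, Finsupp.degree_single]⟩
  · exact Or.inr htwo

lemma two_sub_card_support_eq_sum_ite [DecidableEq σ] [Ring R] {d : σ →₀ ℕ} (hdeg : d.degree = 4)
    (heven : ∀ i, Even (d i)) {S : Finset σ} (hS : d.support ⊆ S) :
    (2 - #d.support : R) = ∑ i ∈ S, if d = Finsupp.single i 4 then 1 else 0 := by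
  rcases eq_single_or_card_support_eq_two hdeg heven with ⟨j, rfl⟩ | htwo
  · have hj : j ∈ S := hS (by simp)
    have hcard : #(Finsupp.single j 4).support = 1 :=
      Finsupp.card_support_eq_one'.2 ⟨j, 4, four_ne_zero, rfl⟩
    simp only [hcard, Finsupp.single_left_inj four_ne_zero, sum_ite_eq, hj, if_true]
    norm_num
  · have hne (i : σ) : d ≠ Finsupp.single i 4 := by
      rintro rfl
      simp at htwo
    simp [htwo, hne]

variable [Fintype σ]

-- An even exponent `d` of degree `4` supported in `S` is supported in `#S - 1` of the sets
-- `S.erase i` if it is some `single j 4`, and in `#S - 2` of them otherwise.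
lemma sum_ite_support_subset_erase [DecidableEq σ] [CommRing R] {d : σ →₀ ℕ} (hdeg : d.degree = 4)
    (S : Finset σ) (c : R) :
    ∑ i ∈ S, (if (∀ j, Even (d j)) ∧ d.support ⊆ S.erase i then c else 0) =
      (#S - 2) * (if (∀ j, Even (d j)) ∧ d.support ⊆ S then c else 0) +
        c * ∑ i ∈ S, if d = Finsupp.single i 4 then 1 else 0 := by
  by_cases heven : ∀ j, Even (d j)
  swap
  · have hne (i : σ) : d ≠ Finsupp.single i 4 := by
      rintro rfl
      refine heven fun j => ?_
      rw [Finsupp.single_apply]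
      split_ifs <;> decide
    simp [heven, hne]
  by_cases hS : d.support ⊆ S
  swap
  · have herase (i : σ) : ¬d.support ⊆ S.erase i := fun h => hS (h.trans (erase_subset _ _))
    have hne : ∀ i ∈ S, d ≠ Finsupp.single i 4 := by
      rintro i hi rfl
      exact hS (Finsupp.support_single_subset.trans (singleton_subset_iff.2 hi))
    simp [hS, herase, sum_ite_of_false hne]
  have hlhs : ∑ i ∈ S, (if (∀ j, Even (d j)) ∧ d.support ⊆ S.erase i then c else 0) =
      (#S - #d.support) * c := by
    simp only [heven, implies_true, subset_erase, hS, true_and]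
    rw [← sum_filter, sum_const, nsmul_eq_mul, filter_notMem_eq_sdiff, cast_card_sdiff hS]
  rw [hlhs, ← two_sub_card_support_eq_sum_ite hdeg heven hS, if_pos ⟨heven, hS⟩]
  ring

lemma sum_signSum_erase [DecidableEq σ] [CommRing R] {w : MvPolynomial σ R}
    (hw : w.IsHomogeneous 4) (S : Finset σ) :
    ∑ i ∈ S, signSum (S.erase i) w = (#S - 2) * signSum S w +
      2 ^ Fintype.card σ * ∑ i ∈ S, coeff (Finsupp.single i 4) w := by
  have hcoeff (i : σ) : coeff (Finsupp.single i 4) w =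
      ∑ d ∈ w.support, coeff d w * if d = Finsupp.single i 4 then 1 else 0 := by
    simp +contextual [sum_ite_eq']
  simp only [signSum_eq_sum_support, hcoeff]
  rw [sum_comm, sum_comm (s := S) (t := w.support)]
  simp only [← mul_sum]
  rw [mul_sum, mul_sum, ← sum_add_distrib]
  refine sum_congr rfl fun d hd => ?_
  have hdeg : d.degree = 4 := (hw.degree_eq_sum_deg_support hd).symm
  rw [sum_ite_support_subset_erase hdeg]
  ring

lemma eq_zero_of_forall_card_eq_sum_eq_zero {M : Type*} [AddCommGroup M] [IsAddTorsionFree M]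
    {m : ℕ} (hm : m ≠ 0) (hmσ : m < Fintype.card σ) {a : σ → M}
    (ha : ∀ S : Finset σ, #S = m → ∑ i ∈ S, a i = 0) (j : σ) : a j = 0 := by
  classical
  obtain ⟨S, hS, hcard⟩ := exists_subset_card_eq (s := univ.erase j) (n := m)
    (by rw [card_erase_of_mem (mem_univ j), card_univ]; omega)
  have hj : j ∉ S := fun h => notMem_erase j _ (hS h)
  have hswap : ∀ i ∈ S, a i = a j := fun i hi => by
    have hji : j ∉ S.erase i := fun h => hj (mem_of_mem_erase h)
    have hsum := ha (insert j (S.erase i)) (by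
      rw [card_insert_of_notMem hji, card_erase_add_one hi, hcard])
    rw [sum_insert hji] at hsum
    exact add_right_cancel ((add_sum_erase S a hi).trans ((ha S hcard).trans hsum.symm))
  have hconst := ha S hcard
  rw [sum_congr rfl hswap, sum_const, hcard] at hconst
  exact (nsmul_eq_zero_iff_right hm).1 hconst

lemma coeff_single_four_eq_zero_of_eval_signVector [DecidableEq σ] [CommRing R] [IsDomain R]
    [CharZero R] {w : MvPolynomial σ R} (hw : w.IsHomogeneous 4) {k : ℕ}
    (hk : k + 2 ≤ Fintype.card σ)
    (hzero : ∀ T : Finset σ, #T = k ∨ #T = k + 1 → ∀ ε, eval (signVector R T ε) w = 0) (i : σ) :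
    coeff (Finsupp.single i 4) w = 0 := by
  have hsum : ∀ T : Finset σ, #T = k ∨ #T = k + 1 → signSum T w = 0 := fun T hT =>
    sum_eq_zero fun ε _ => hzero T hT ε
  refine eq_zero_of_forall_card_eq_sum_eq_zero (a := fun i => coeff (Finsupp.single i 4) w)
    k.succ_ne_zero hk (fun S hS => ?_) i
  have hcount := sum_signSum_erase hw S
  rw [hsum S (Or.inr hS), mul_zero, zero_add, sum_eq_zero fun i hi =>
    hsum (S.erase i) (Or.inl (by rw [card_erase_of_mem hi, hS, Nat.succ_sub_one]))] at hcount
  exact (mul_eq_zero_iff_left (pow_ne_zero _ two_ne_zero)).1 hcount.symm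

end QuarticForms

section EvenSymmetricSextic

/-- The even symmetric sextic `f_{n,k}`, in the variables `σ` (so `n = |σ|`) over the ring `R`. -/
noncomputable def evenSymmetricSextic (σ R : Type*) [Fintype σ] [CommRing R] (k : ℕ) :
    MvPolynomial σ R :=
  (k ^ 2 + k) * psum σ R 6 - (2 * k + 1) * psum σ R 2 * psum σ R 4 + psum σ R 2 ^ 3

variable {σ R : Type*} [Fintype σ]

lemma isHomogeneous_psum [CommSemiring R] (n : ℕ) : (psum σ R n).IsHomogeneous n :=
  IsHomogeneous.sum _ _ _ fun i _ => isHomogeneous_X_pow i n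

lemma isHomogeneous_evenSymmetricSextic [CommRing R] (k : ℕ) :
    (evenSymmetricSextic σ R k).IsHomogeneous 6 := by
  have hcast (c : ℕ) {p : MvPolynomial σ R} (hp : p.IsHomogeneous 6) :
      ((c : MvPolynomial σ R) * p).IsHomogeneous 6 := by
    simpa using hp.C_mul (c : R)
  have h6 := hcast (k ^ 2 + k) (isHomogeneous_psum 6)
  have h24 := hcast (2 * k + 1) ((isHomogeneous_psum 2).mul (isHomogeneous_psum 4))
  have h222 := (isHomogeneous_psum (σ := σ) (R := R) 2).pow 3
  push_cast at h6 h24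
  simpa only [evenSymmetricSextic, mul_assoc] using (h6.sub h24).add h222

lemma eval_evenSymmetricSextic_signVector [DecidableEq σ] [CommRing R] (k : ℕ) (T : Finset σ)
    (ε : σ → ℤˣ) :
    eval (signVector R T ε) (evenSymmetricSextic σ R k) = #T * (#T - k) * (#T - k - 1) := by
  have hpsum {r : ℕ} (hr : Even r) (hr0 : r ≠ 0) :
      eval (signVector R T ε) (psum σ R r) = #T := by
    have hsign (s : ℤˣ) : ((s : ℤ) : R) ^ r = 1 := by
      rcases Int.units_eq_one_or s with rfl | rfl <;> simp [hr.neg_one_pow]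
    simp [psum, signVector, ite_pow, hsign, hr0]
  have h2 := hpsum even_two two_ne_zero
  have h4 := hpsum (by decide : Even 4) four_ne_zero
  have h6 := hpsum (by decide : Even 6) (by decide)
  simp only [evenSymmetricSextic, map_add, map_sub, map_mul, map_pow, map_natCast, map_ofNat,
    map_one, h2, h4, h6]
  ring

lemma eval_piSingle_one_evenSymmetricSextic [DecidableEq σ] [CommRing R] (k : ℕ) (i : σ) :
    eval (Pi.single i 1) (evenSymmetricSextic σ R k) = k * (k - 1) := by
  rw [← signVector_singleton_one, eval_evenSymmetricSextic_signVector, card_singleton]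
  push_cast
  ring

lemma evenSymmetricSextic_fin_four_two :
    evenSymmetricSextic (Fin 4) ℝ 2 =
      6 * powerSum 4 6 - 5 * powerSum 4 2 * powerSum 4 4 + powerSum 4 2 ^ 3 := by
  norm_num [evenSymmetricSextic, powerSum, psum]

variable [CommRing R] [LinearOrder R] [IsStrictOrderedRing R] {ι κ : Type*} [Fintype ι] [Fintype κ]
  {k : ℕ} {u : ι → MvPolynomial σ R} {v : κ → MvPolynomial σ R}

lemma evenSymmetricSextic_mul_sum_sq_homogeneousComponent (hv : ∀ j, (v j).totalDegree ≤ 1)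
    (h : evenSymmetricSextic σ R k * ∑ j, v j ^ 2 = ∑ i, u i ^ 2) :
    evenSymmetricSextic σ R k * ∑ j, homogeneousComponent 1 (v j) ^ 2 =
      ∑ i, homogeneousComponent 4 (u i) ^ 2 := by
  have hf := isHomogeneous_evenSymmetricSextic (σ := σ) (R := R) k
  have hvdeg : (∑ j, v j ^ 2).totalDegree ≤ 1 + 1 :=
    totalDegree_finsetSum_le fun j _ => (totalDegree_pow _ _).trans (Nat.mul_le_mul_left 2 (hv j))
  have hudeg : ∀ i, (u i).totalDegree ≤ 4 := totalDegree_le_of_sum_sq <| by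
    have hmul := totalDegree_mul (evenSymmetricSextic σ R k) (∑ j, v j ^ 2)
    have hfdeg := hf.totalDegree_le
    rw [← h]
    omega
  rw [← homogeneousComponent_sum_sq hudeg, ← h, ← homogeneousComponent_sum_sq hv]
  nth_rewrite 1 [← homogeneousComponent_eq_self hf]
  exact (homogeneousComponent_mul_of_totalDegree_le hf.totalDegree_le hvdeg).symm

lemma coeff_single_one_eq_zero_of_evenSymmetricSextic_mul_sum_sq (hk : 2 ≤ k)
    (hσ : k + 2 ≤ Fintype.card σ) (hv : ∀ j, (v j).totalDegree ≤ 1)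
    (h : evenSymmetricSextic σ R k * ∑ j, v j ^ 2 = ∑ i, u i ^ 2) (j : κ) (a : σ) :
    coeff (Finsupp.single a 1) (v j) = 0 := by
  classical
  have htop := evenSymmetricSextic_mul_sum_sq_homogeneousComponent hv h
  have heval (x : σ → R) : eval x (evenSymmetricSextic σ R k) *
      ∑ j, eval x (homogeneousComponent 1 (v j)) ^ 2 =
        ∑ i, eval x (homogeneousComponent 4 (u i)) ^ 2 := by
    simpa using congrArg (eval x) htop
  have hquartic (i : ι) : eval (Pi.single a 1) (homogeneousComponent 4 (u i)) = 0 := by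
    rw [eval_piSingle_one_of_isHomogeneous (homogeneousComponent_isHomogeneous _ _)]
    refine coeff_single_four_eq_zero_of_eval_signVector (homogeneousComponent_isHomogeneous _ _) hσ
      (fun T hT ε => ?_) a
    have hz := heval (signVector R T ε)
    have hf : (#T * (#T - k) * (#T - k - 1) : R) = 0 := by
      rcases hT with hT | hT <;> simp [hT]
    rw [eval_evenSymmetricSextic_signVector, hf, zero_mul, eq_comm,
      Fintype.sum_eq_zero_iff_of_nonneg fun _ => sq_nonneg _] at hz
    simpa using congrFun hz i
  have hk0 : (k * (k - 1) : R) ≠ 0 := by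
    have hk' : (2 : R) ≤ k := by exact_mod_cast hk
    exact mul_ne_zero (by linarith) (by linarith)
  have hunit := heval (Pi.single a 1)
  simp only [hquartic, eval_piSingle_one_evenSymmetricSextic, ne_eq, OfNat.ofNat_ne_zero,
    not_false_eq_true, zero_pow, sum_const_zero, mul_eq_zero_iff_left hk0] at hunit
  rw [Fintype.sum_eq_zero_iff_of_nonneg fun _ => sq_nonneg _] at hunit
  have hj := pow_eq_zero_iff two_ne_zero |>.1 (congrFun hunit j)
  rwa [eval_piSingle_one_of_isHomogeneous (homogeneousComponent_isHomogeneous _ _),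
    coeff_homogeneousComponent, if_pos (Finsupp.degree_single _ _)] at hj

lemma totalDegree_eq_zero_of_evenSymmetricSextic_mul_sum_sq (hk : 2 ≤ k)
    (hσ : k + 2 ≤ Fintype.card σ) (hv : ∀ j, (v j).totalDegree ≤ 1)
    (h : evenSymmetricSextic σ R k * ∑ j, v j ^ 2 = ∑ i, u i ^ 2) (j : κ) :
    (v j).totalDegree = 0 := by
  refine Nat.le_zero.1 (totalDegree_le_of_homogeneousComponent_eq_zero (hv j) ?_)
  ext d
  rw [coeff_homogeneousComponent, coeff_zero]
  split_ifs with hd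
  · obtain ⟨a, rfl⟩ := (Finsupp.sum_eq_one_iff d).1 hd
    exact coeff_single_one_eq_zero_of_evenSymmetricSextic_mul_sum_sq hk hσ hv h j a
  · rfl

theorem statement16_general (hk : 2 ≤ k) (hσ : k + 2 ≤ Fintype.card σ)
    (hv : ∀ j, (v j).totalDegree ≤ 1)
    (h : evenSymmetricSextic σ R k * ∑ j, v j ^ 2 = ∑ i, u i ^ 2) : ∑ j, v j ^ 2 = 0 := by
  have hdeg := totalDegree_eq_zero_of_evenSymmetricSextic_mul_sum_sq hk hσ hv h
  obtain ⟨a⟩ : Nonempty σ := Fintype.card_pos_iff.1 (by omega)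
  -- Multiplying both sides by `X a ^ 2` turns the constants `v j` into linear forms.
  have hX : evenSymmetricSextic σ R k * ∑ j, (X a * v j) ^ 2 = ∑ i, (X a * u i) ^ 2 := by
    simp only [mul_pow, ← mul_sum, ← h]
    ring
  have hXdeg (j : κ) : (X a * v j).totalDegree ≤ 1 :=
    (totalDegree_mul _ _).trans (by rw [totalDegree_X, hdeg j])
  refine sum_eq_zero fun j _ => ?_
  have hXdeg0 := totalDegree_eq_zero_of_evenSymmetricSextic_mul_sum_sq hk hσ hXdeg hX j
  have hzero : v j = 0 := by
    by_contra hne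
    rw [totalDegree_mul_of_isDomain (X_ne_zero a) hne, totalDegree_X] at hXdeg0
    omega
  rw [hzero, zero_pow two_ne_zero]

end EvenSymmetricSextic

/-- the even symmetric sextic
`f_{4,2} = 6·M₆ − 5·M₂·M₄ + M₂³` in `ℝ[X₁,…,X₄]` admits no Hilbert–Artin
representation with denominator of degree ≤ 2: there are no polynomials
`u₁,…,u_l, v₁,…,v_{l'}` with `deg(vⱼ) ≤ 1` for all `j` and `Σⱼ vⱼ² ≠ 0` such
that `f_{4,2} · Σⱼ vⱼ² = Σᵢ uᵢ²`. -/
theorem statement16 :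
    ¬ ∃ (l l' : ℕ) (u : Fin l → MvPolynomial (Fin 4) ℝ)
        (v : Fin l' → MvPolynomial (Fin 4) ℝ),
        (∀ j, (v j).totalDegree ≤ 1) ∧ (∑ j, v j ^ 2) ≠ 0 ∧
        (6 * powerSum 4 6 - 5 * powerSum 4 2 * powerSum 4 4 + (powerSum 4 2) ^ 3) *
          (∑ j, v j ^ 2) = ∑ i, u i ^ 2 := by
  rintro ⟨l, l', u, v, hv, hne, h⟩
  exact hne (statement16_general le_rfl (by simp) hv (evenSymmetricSextic_fin_four_two ▸ h))
end

section
/- For every integer n ≥ 3, the even symmetric sextics f_{n,k} are nonnegative on all of ℝⁿ: for every k with 0 ≤ k ≤ n−1 and every point x ∈ ℝⁿ, f_{n,k}(x) ≥ 0, where f_{n,0} = −n·M_{n,6} + (n+1)·M_{n,2}·M_{n,4} − M_{n,2}³ and f_{n,k} = (k²+k)·M_{n,6} − (2k+1)·M_{n,2}·M_{n,4} + M_{n,2}³ for 1 ≤ k ≤ n−1. -/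
open MvPolynomial

/-- The even symmetric sextics:
`f_{n,0} = −n·M₆ + (n+1)·M₂·M₄ − M₂³` and, for `1 ≤ k ≤ n−1`,
`f_{n,k} = (k²+k)·M₆ − (2k+1)·M₂·M₄ + M₂³`. -/
noncomputable def evenSymSextic (n k : ℕ) : MvPolynomial (Fin n) ℝ :=
  if k = 0 then
    -(n : MvPolynomial (Fin n) ℝ) * powerSum n 6
      + ((n : MvPolynomial (Fin n) ℝ) + 1) * powerSum n 2 * powerSum n 4
      - (powerSum n 2) ^ 3
  else
    ((k ^ 2 + k : ℕ) : MvPolynomial (Fin n) ℝ) * powerSum n 6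
      - ((2 * k + 1 : ℕ) : MvPolynomial (Fin n) ℝ) * powerSum n 2 * powerSum n 4
      + (powerSum n 2) ^ 3

/-!
Put `yᵢ = xᵢ²`, so that the sextics become symmetric cubics in nonnegative variables. Twice the
cubic of `f_{n,0}` is `∑ᵢⱼ (yᵢ - yⱼ)² (p - yᵢ - yⱼ)`, where `p = ∑ᵢ yᵢ` is at least `yᵢ + yⱼ` for
`i ≠ j`.

For `k ≥ 1`, replacing two variables by their sum and `0` preserves `p` and does not increase the
cubic if their sum is at most `2 (2k + 1) p / (3 (k² + k))`. One may therefore assume that all pair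
sums are above this threshold. With `m` variables left, `2 m²` times the cubic is a combination of
the `(yᵢ - yⱼ)²`, whose coefficients are then nonnegative, plus `2 (m - k) (m - k - 1) p³`, and
`(m - k) (m - k - 1) ≥ 0` because `m - k` is an integer.
-/

section SymmetricCubics

variable {ι R : Type*} [CommRing R]

theorem sum_sum_sq_sub_mul_affine (s : Finset ι) (y : ι → R) (α β : R) :
    ∑ i ∈ s, ∑ j ∈ s, (y i - y j) ^ 2 * (α * (y i + y j) + β) =
      2 * α * (s.card * ∑ i ∈ s, y i ^ 3 - (∑ i ∈ s, y i) * ∑ i ∈ s, y i ^ 2) +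
        2 * β * (s.card * ∑ i ∈ s, y i ^ 2 - (∑ i ∈ s, y i) ^ 2) := by
  have expand (i j : ι) : (y i - y j) ^ 2 * (α * (y i + y j) + β) =
      (α * y i ^ 3 + β * y i ^ 2) + (α * y j ^ 3 + β * y j ^ 2)
        - α * (y i ^ 2 * y j) - α * (y i * y j ^ 2) - 2 * β * (y i * y j) := by
    ring
  simp only [expand, Finset.sum_add_distrib, Finset.sum_sub_distrib, ← Finset.mul_sum,
    ← Finset.sum_mul, Finset.sum_const, nsmul_eq_mul]
  ring

theorem sum_offDiag_add (s : Finset ι) (y : ι → R) :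
    ∑ q ∈ s.offDiag, (y q.1 + y q.2) = 2 * (s.card - 1) * ∑ i ∈ s, y i := by
  classical
  have split := Finset.sum_union (Finset.disjoint_diag_offDiag s) (f := fun q => y q.1 + y q.2)
  rw [Finset.diag_union_offDiag, Finset.sum_product, Finset.sum_diag] at split
  simp only [Finset.sum_add_distrib, Finset.sum_const, nsmul_eq_mul, ← Finset.mul_sum] at split ⊢
  linear_combination -split

theorem sum_erase_update [DecidableEq ι] {s : Finset ι} {a b : ι} (ha : a ∈ s) (hb : b ∈ s)
    (hab : a ≠ b) (y : ι → R) (z : R) (f : R → R) :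
    ∑ i ∈ s.erase b, f (Function.update y a z i) =
      ∑ i ∈ s, f (y i) - f (y a) - f (y b) + f z := by
  have ha' : a ∈ s.erase b := Finset.mem_erase.2 ⟨hab, ha⟩
  have unchanged : ∑ i ∈ (s.erase b).erase a, f (Function.update y a z i) =
      ∑ i ∈ (s.erase b).erase a, f (y i) :=
    Finset.sum_congr rfl fun i hi => by rw [Function.update_of_ne (Finset.ne_of_mem_erase hi)]
  rw [← Finset.add_sum_erase _ _ ha', unchanged, Function.update_self,
    Finset.sum_erase_eq_sub ha', Finset.sum_erase_eq_sub hb]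
  ring

/-- The symmetric cubic in the `y i` whose value at `y i = x i ^ 2` is the even symmetric sextic
`f_{n,k}(x)`, for `k ≠ 0`. The parameter `k` ranges over the ring, since the identities below are
polynomial in `k`. -/
def symmCubic (k : R) (s : Finset ι) (y : ι → R) : R :=
  (k ^ 2 + k) * ∑ i ∈ s, y i ^ 3 - (2 * k + 1) * (∑ i ∈ s, y i) * ∑ i ∈ s, y i ^ 2
    + (∑ i ∈ s, y i) ^ 3

theorem symmCubic_erase_update_add [DecidableEq ι] (k : R) {s : Finset ι} {a b : ι}
    (ha : a ∈ s) (hb : b ∈ s) (hab : a ≠ b) (y : ι → R) :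
    symmCubic k (s.erase b) (Function.update y a (y a + y b)) = symmCubic k s y +
      y a * y b * (3 * (k ^ 2 + k) * (y a + y b) - 2 * (2 * k + 1) * ∑ i ∈ s, y i) := by
  have power_sum (r : ℕ) := sum_erase_update ha hb hab y (y a + y b) (· ^ r)
  have linear_sum := sum_erase_update ha hb hab y (y a + y b) id
  simp only [id_eq] at linear_sum
  rw [symmCubic, symmCubic, power_sum, power_sum, linear_sum]
  ring

theorem two_mul_card_sq_mul_symmCubic (k : R) (s : Finset ι) (y : ι → R) :
    2 * (s.card : R) ^ 2 * symmCubic k s y =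
      ∑ i ∈ s, ∑ j ∈ s, (y i - y j) ^ 2 * (s.card * (k ^ 2 + k) * (y i + y j) +
          (k ^ 2 + k - (2 * k + 1) * s.card) * ∑ l ∈ s, y l) +
        2 * ((s.card - k) ^ 2 - (s.card - k)) * (∑ i ∈ s, y i) ^ 3 := by
  rw [sum_sum_sq_sub_mul_affine, symmCubic]
  ring

variable [LinearOrder R] [IsStrictOrderedRing R]

theorem card_mul_sum_cube_add_sum_cube_le (s : Finset ι) {y : ι → R} (hy : ∀ i ∈ s, 0 ≤ y i) :
    s.card * ∑ i ∈ s, y i ^ 3 + (∑ i ∈ s, y i) ^ 3 ≤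
      (s.card + 1) * (∑ i ∈ s, y i) * ∑ i ∈ s, y i ^ 2 := by
  classical
  have sos_nonneg : 0 ≤ ∑ i ∈ s, ∑ j ∈ s,
      (y i - y j) ^ 2 * (-1 * (y i + y j) + ∑ l ∈ s, y l) := by
    refine Finset.sum_nonneg fun i hi => Finset.sum_nonneg fun j hj => ?_
    obtain rfl | hij := eq_or_ne i j
    · simp
    · have pair_le : y i + y j ≤ ∑ l ∈ s, y l := Finset.add_le_sum hy hi hj hij
      exact mul_nonneg (sq_nonneg _) (by linarith)
  rw [sum_sum_sq_sub_mul_affine] at sos_nonneg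
  linarith

theorem card_mul_le_two_mul_sum_of_pairwise {s : Finset ι} (hs : s.Nontrivial) {y : ι → R}
    {c : R} (hc : (s : Set ι).Pairwise fun i j => c ≤ y i + y j) :
    s.card * c ≤ 2 * ∑ i ∈ s, y i := by
  have card_gt : (1 : R) < s.card := Nat.one_lt_cast.2 (Finset.one_lt_card_iff_nontrivial.2 hs)
  have offDiag_le : s.offDiag.card • c ≤ ∑ q ∈ s.offDiag, (y q.1 + y q.2) :=
    Finset.card_nsmul_le_sum _ _ _ fun q hq =>
      have ⟨h₁, h₂, hne⟩ := Finset.mem_offDiag.1 hq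
      hc h₁ h₂ hne
  rw [sum_offDiag_add, Finset.offDiag_card, nsmul_eq_mul,
    Nat.cast_sub (Nat.le_mul_self _), Nat.cast_mul] at offDiag_le
  refine le_of_mul_le_mul_left ?_ (sub_pos.2 card_gt)
  linarith

theorem symmCubic_nonneg_of_pairwise (k : ℤ) {s : Finset ι} {y : ι → R}
    (hy : ∀ i ∈ s, 0 ≤ y i)
    (hpair : (s : Set ι).Pairwise fun i j =>
      2 * (2 * k + 1) * ∑ l ∈ s, y l ≤ 3 * ((k : R) ^ 2 + k) * (y i + y j)) :
    0 ≤ symmCubic (k : R) s y := by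
  obtain rfl | hs := s.eq_empty_or_nonempty
  · simp [symmCubic]
  have card_pos : (0 : R) < s.card := Nat.cast_pos.2 hs.card_pos
  have sos_nonneg : 0 ≤ ∑ i ∈ s, ∑ j ∈ s, (y i - y j) ^ 2 *
      (s.card * ((k : R) ^ 2 + k) * (y i + y j) +
        ((k : R) ^ 2 + k - (2 * k + 1) * s.card) * ∑ l ∈ s, y l) := by
    refine Finset.sum_nonneg fun i hi => Finset.sum_nonneg fun j hj => ?_
    obtain rfl | hij := eq_or_ne i j
    · simp
    · have average_le := card_mul_le_two_mul_sum_of_pairwise ⟨i, hi, j, hj, hij⟩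
        (y := fun i => 3 * ((k : R) ^ 2 + k) * y i) (by simpa only [mul_add] using hpair)
      have pair_le := mul_le_mul_of_nonneg_left (hpair hi hj hij) card_pos.le
      rw [← Finset.mul_sum] at average_le
      exact mul_nonneg (sq_nonneg _) (by linarith)
  have integer_gap : (0 : R) ≤ (s.card - k) ^ 2 - (s.card - k) :=
    mod_cast sub_nonneg.2 (Int.le_self_sq (s.card - k))
  have gap_term_nonneg : 0 ≤ 2 * (((s.card : R) - k) ^ 2 - (s.card - k)) * (∑ i ∈ s, y i) ^ 3 :=
    mul_nonneg (mul_nonneg zero_le_two integer_gap) (pow_nonneg (Finset.sum_nonneg hy) 3)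
  refine nonneg_of_mul_nonneg_right (a := 2 * (s.card : R) ^ 2) ?_ (by positivity)
  rw [two_mul_card_sq_mul_symmCubic]
  exact add_nonneg sos_nonneg gap_term_nonneg

theorem symmCubic_nonneg (k : ℤ) (s : Finset ι) {y : ι → R} (hy : ∀ i ∈ s, 0 ≤ y i) :
    0 ≤ symmCubic (k : R) s y := by
  classical
  induction s using Finset.strongInduction generalizing y with
  | H s ih =>
    by_cases hpair : (s : Set ι).Pairwise fun i j =>
        2 * (2 * k + 1) * ∑ l ∈ s, y l ≤ 3 * ((k : R) ^ 2 + k) * (y i + y j)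
    · exact symmCubic_nonneg_of_pairwise k hy hpair
    simp only [Set.Pairwise, not_forall, not_le] at hpair
    obtain ⟨a, ha, b, hb, hab, small_pair⟩ := hpair
    have merged_entry_nonneg : ∀ i ∈ s.erase b, 0 ≤ Function.update y a (y a + y b) i := by
      intro i hi
      obtain rfl | hia := eq_or_ne i a
      · rw [Function.update_self]
        exact add_nonneg (hy _ ha) (hy _ hb)
      · rw [Function.update_of_ne hia]
        exact hy i (Finset.mem_of_mem_erase hi)
    have change_nonpos := mul_nonpos_of_nonneg_of_nonpos (mul_nonneg (hy a ha) (hy b hb))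
      (sub_nonpos.2 small_pair.le)
    calc 0 ≤ symmCubic (k : R) (s.erase b) (Function.update y a (y a + y b)) :=
          ih _ (Finset.erase_ssubset hb) merged_entry_nonneg
      _ ≤ symmCubic (k : R) s y := by
          rw [symmCubic_erase_update_add _ ha hb hab]
          exact add_le_of_nonpos_right change_nonpos

end SymmetricCubics

theorem eval_powerSum (n r : ℕ) (x : Fin n → ℝ) :
    eval x (powerSum n r) = ∑ i, x i ^ r := by
  simp [powerSum]

theorem eval_evenSymSextic_zero (n : ℕ) (x : Fin n → ℝ) :
    eval x (evenSymSextic n 0) =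
      -n * ∑ i, (x i ^ 2) ^ 3 + (n + 1) * (∑ i, x i ^ 2) * ∑ i, (x i ^ 2) ^ 2
        - (∑ i, x i ^ 2) ^ 3 := by
  simp [evenSymSextic, eval_powerSum, ← pow_mul]

theorem eval_evenSymSextic_of_ne_zero (n : ℕ) {k : ℕ} (hk : k ≠ 0) (x : Fin n → ℝ) :
    eval x (evenSymSextic n k) = symmCubic (k : ℝ) Finset.univ fun i => x i ^ 2 := by
  simp [evenSymSextic, hk, symmCubic, eval_powerSum, ← pow_mul]

theorem statement18_general (n k : ℕ) (x : Fin n → ℝ) : 0 ≤ eval x (evenSymSextic n k) := by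
  have square_nonneg : ∀ i ∈ Finset.univ, 0 ≤ x i ^ 2 := fun i _ => sq_nonneg (x i)
  obtain rfl | hk := eq_or_ne k 0
  · have bound := card_mul_sum_cube_add_sum_cube_le Finset.univ square_nonneg
    rw [Finset.card_fin] at bound
    rw [eval_evenSymSextic_zero]
    linarith
  · rw [eval_evenSymSextic_of_ne_zero n hk]
    exact mod_cast symmCubic_nonneg (k : ℤ) Finset.univ square_nonneg

/-- for every `n ≥ 3` and every `0 ≤ k ≤ n−1`, the even symmetric
sextic `f_{n,k}` is nonnegative on all of `ℝⁿ`. -/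
theorem statement18 (n k : ℕ) (hn : 3 ≤ n) (hk : k ≤ n - 1) :
    ∀ x : Fin n → ℝ, 0 ≤ eval x (evenSymSextic n k) :=
  statement18_general n k
end
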